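/- Let Ω be a bounded domain in ℂⁿ and let a, b be distinct points of Ω. Then for every M > 0 and ε > 0 there exist a positive integer N and real coefficients c_β, indexed by multi-indices β ∈ ℕ^{2n} with |β| ≤ N (derivatives with respect to the 2n real coordinates of ℂⁿ ≅ ℝ^{2n}), such that for every pluriharmonic function u : Ω → ℝ with |u(z)| < M for all z ∈ Ω, |u(b) − Σ_{|β| ≤ N} c_β (∂^β u)(a)| < ε. The integer N and the coefficients c_β depend on Ω, a, b, ε, M but not on u. -/

import Mathlib

open MeasureTheory Finset

/-- Real directional (partial) derivative of `u : ℂⁿ → ℝ` in the direction `v`. -/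
noncomputable def rpderiv {n : ℕ} (v : Fin n → ℂ) (u : (Fin n → ℂ) → ℝ) :
    (Fin n → ℂ) → ℝ :=
  fun z => fderiv ℝ u z v

/-- Multi-index real partial derivative of `u : ℂⁿ → ℝ` with respect to the `2n`
real coordinates of `ℂⁿ ≅ ℝ^{2n}`: the multi-index `β : Fin n → ℕ × ℕ` records the
number of `xᵢ`-derivatives and `yᵢ`-derivatives in the `i`-th complex coordinate
`zᵢ = xᵢ + i yᵢ`. -/
noncomputable def mpderivR {n : ℕ} (β : Fin n → ℕ × ℕ) :
    ((Fin n → ℂ) → ℝ) → ((Fin n → ℂ) → ℝ) :=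
  ((List.finRange n).map fun i =>
      (rpderiv (Pi.single i 1))^[(β i).1] ∘
        (rpderiv (Pi.single i Complex.I))^[(β i).2]).foldr (· ∘ ·) id

/-- `u` is pluriharmonic on `Ω ⊆ ℂⁿ`: every point of `Ω` has an open neighborhood
contained in `Ω` on which `u` is the real part of a holomorphic function. -/
def PluriharmonicOn {n : ℕ} (u : (Fin n → ℂ) → ℝ) (Ω : Set (Fin n → ℂ)) : Prop :=
  ∀ z ∈ Ω, ∃ V : Set (Fin n → ℂ), IsOpen V ∧ z ∈ V ∧ V ⊆ Ω ∧
    ∃ f : (Fin n → ℂ) → ℂ, DifferentiableOn ℂ f V ∧ ∀ w ∈ V, (f w).re = u w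

/-!
On a complex line a pluriharmonic function is the real part of a holomorphic function of one
variable. By the Borel–Carathéodory theorem and the Cauchy estimates its Taylor series then
converges at a rate depending only on a local bound for `|u|`. So if a closed subspace, for uniform
convergence over a normal family, contains all derivative functionals at a point, it contains those
at every nearby point, and as `Ω` is connected this property spreads from `a` to `b`. Applied to
the closure of the span of the functionals `u ↦ (∂^β u)(a)`, this gives the approximation of `u(b)`.
-/

open Metric Filter Topology
open Set (MapsTo EqOn)
open scoped ContDiff UniformConvergence

section Holomorphic

variable {E F : Type*} [NormedAddCommGroup E] [NormedSpace ℂ E] [NormedAddCommGroup F]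
  [NormedSpace ℂ F]

theorem norm_sub_sub_fderiv_le_of_mapsTo_ball {f : E → F} {z w : E} {R K : ℝ}
    (hf : DifferentiableOn ℂ f (ball z R)) (hK : MapsTo f (ball z R) (closedBall (f z) K))
    (hw : w ∈ ball z R) :
    ‖f w - f z - fderiv ℂ f z (w - z)‖ ≤ 2 * K * (‖w - z‖ / R) ^ 2 := by
  have hR : 0 < R := pos_of_mem_ball hw
  have hfz : HasFDerivAt f (fderiv ℂ f z) z :=
    (hf.differentiableAt (ball_mem_nhds z hR)).hasFDerivAt
  set r : E → F := fun x ↦ f x - fderiv ℂ f z (x - z) with hr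
  have hrz : r z = f z := by simp [hr]
  have hmaps : MapsTo r (ball z R) (closedBall (r z) (2 * K)) := by
    intro x hx
    have hfx : ‖f x - f z‖ ≤ K := by simpa [dist_eq_norm] using hK hx
    have hxR : ‖x - z‖ ≤ R := by simpa [dist_eq_norm] using (mem_ball.1 hx).le
    have hlin : ‖fderiv ℂ f z (x - z)‖ ≤ K :=
      calc ‖fderiv ℂ f z (x - z)‖ ≤ ‖fderiv ℂ f z‖ * ‖x - z‖ := (fderiv ℂ f z).le_opNorm _
        _ ≤ K / R * R := by
          gcongr
          · exact div_nonneg ((norm_nonneg _).trans hfx) hR.le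
          · exact Complex.norm_fderiv_le_div_of_mapsTo_ball hf hK hR
        _ = K := div_mul_cancel₀ K hR.ne'
    rw [mem_closedBall, dist_eq_norm, hrz, hr, sub_right_comm]
    linarith [norm_sub_le (f x - f z) (fderiv ℂ f z (x - z))]
  have hsmall : (r · - r z) =o[𝓝 z] fun x ↦ ‖x - z‖ ^ 1 := by
    simp only [hrz, pow_one]
    simpa only [hr, sub_right_comm] using hfz.isLittleO.norm_right
  have hrd : DifferentiableOn ℂ r (ball z R) := by fun_prop
  have := Complex.dist_le_mul_div_pow_of_mapsTo_ball_of_isLittleO hrd hmaps hsmall hw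
  rwa [dist_eq_norm, dist_eq_norm, hrz, hr, sub_right_comm] at this

theorem norm_fderiv_apply_sub_inv_smul_le_of_mapsTo_ball {f : E → F} {z v : E} {R K : ℝ} {t : ℂ}
    (hf : DifferentiableOn ℂ f (ball z R)) (hK : MapsTo f (ball z R) (closedBall (f z) K))
    (ht₀ : t ≠ 0) (ht : ‖t • v‖ < R) :
    ‖fderiv ℂ f z v - t⁻¹ • (f (z + t • v) - f z)‖ ≤ 2 * K * (‖v‖ / R) ^ 2 * ‖t‖ := by
  have htaylor := norm_sub_sub_fderiv_le_of_mapsTo_ball hf hK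
    (show z + t • v ∈ ball z R by simpa [dist_eq_norm] using ht)
  rw [add_sub_cancel_left, map_smul] at htaylor
  have hquot : fderiv ℂ f z v - t⁻¹ • (f (z + t • v) - f z) =
      -(t⁻¹ • (f (z + t • v) - f z - t • fderiv ℂ f z v)) := by
    rw [smul_sub _ _ (t • _), inv_smul_smul₀ ht₀, neg_sub]
  calc ‖fderiv ℂ f z v - t⁻¹ • (f (z + t • v) - f z)‖
      = ‖t‖⁻¹ * ‖f (z + t • v) - f z - t • fderiv ℂ f z v‖ := by
        rw [hquot, norm_neg, norm_smul, norm_inv]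
    _ ≤ ‖t‖⁻¹ * (2 * K * (‖t • v‖ / R) ^ 2) := by gcongr
    _ = 2 * K * (‖v‖ / R) ^ 2 * ‖t‖ := by
        have := norm_ne_zero_iff.2 ht₀
        rw [norm_smul]
        field_simp

theorem uniformCauchySeqOn_fderiv_of_tendstoUniformlyOn_ball {ι : Type*} {l : Filter ι}
    {f : ι → E → F} {g : E → F} {z : E} {R : ℝ} (hR : 0 < R)
    (hf : ∀ᶠ i in l, DifferentiableOn ℂ (f i) (ball z R))
    (hfg : TendstoUniformlyOn f g l (ball z R)) :
    UniformCauchySeqOn (fun i ↦ fderiv ℂ (f i)) l (ball z (R / 2)) := by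
  intro U hU
  obtain ⟨ε, hε, hεU⟩ := Metric.mem_uniformity_dist.1 hU
  have hδ : 0 < ε * R / 8 := by positivity
  filter_upwards [hfg.uniformCauchySeqOn _ (dist_mem_uniformity hδ), hf.prod_mk hf]
    with ⟨i, j⟩ hclose ⟨hi, hj⟩ w hw
  have hsub : ball w (R / 2) ⊆ ball z R := ball_subset_ball' (by linarith [mem_ball.1 hw])
  have hwR : w ∈ ball w (R / 2) := mem_ball_self (by positivity)
  have hnorm : ∀ x ∈ ball w (R / 2), ‖(f i - f j) x‖ < ε * R / 8 := fun x hx ↦ by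
    simpa only [dist_eq_norm, Pi.sub_apply] using hclose x (hsub hx)
  have hmaps : MapsTo (f i - f j) (ball w (R / 2)) (closedBall ((f i - f j) w) (ε * R / 4)) := by
    intro x hx
    rw [mem_closedBall, dist_eq_norm]
    exact (norm_sub_le _ _).trans (by linarith [hnorm x hx, hnorm w hwR])
  have hdiff (k : ι) (hk : DifferentiableOn ℂ (f k) (ball z R)) : DifferentiableAt ℂ (f k) w :=
    hk.differentiableAt (isOpen_ball.mem_nhds (hsub hwR))
  have hfderiv := Complex.norm_fderiv_le_div_of_mapsTo_ball
    ((hi.mono hsub).sub (hj.mono hsub)) hmaps (by positivity)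
  rw [fderiv_sub (hdiff i hi) (hdiff j hj)] at hfderiv
  refine hεU ?_
  calc dist (fderiv ℂ (f i) w) (fderiv ℂ (f j) w) ≤ ε * R / 4 / (R / 2) := by
        rwa [dist_eq_norm]
    _ = ε / 2 := by field_simp; norm_num
    _ < ε := half_lt_self hε

theorem differentiableAt_of_tendstoUniformlyOn_ball [CompleteSpace F] {ι : Type*} {l : Filter ι}
    [l.NeBot] {f : ι → E → F} {g : E → F} {z : E} {R : ℝ} (hR : 0 < R)
    (hf : ∀ᶠ i in l, DifferentiableOn ℂ (f i) (ball z R))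
    (hfg : TendstoUniformlyOn f g l (ball z R)) : DifferentiableAt ℂ g z := by
  have hcauchy := uniformCauchySeqOn_fderiv_of_tendstoUniformlyOn_ball hR hf hfg
  choose! g' hg' using fun w hw ↦ CompleteSpace.complete (hcauchy.cauchy_map (x := w) hw)
  have hz : z ∈ ball z (R / 2) := mem_ball_self (by positivity)
  refine HasFDerivAt.differentiableAt (f' := g' z) <|
    hasFDerivAt_of_tendstoUniformlyOnFilter (l := l) (f := f)
      (f' := fun i ↦ fderiv ℂ (f i)) ?_ ?_ ?_
  · exact (hcauchy.tendstoUniformlyOn_of_tendsto hg').tendstoUniformlyOnFilter.mono_right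
      (le_principal_iff.2 (isOpen_ball.mem_nhds hz))
  · filter_upwards [hf.prod_mk (ball_mem_nhds z hR)] with ⟨i, w⟩ ⟨hi, hw⟩
    exact (hi.differentiableAt (isOpen_ball.mem_nhds hw)).hasFDerivAt
  · filter_upwards [ball_mem_nhds z hR] with w hw using hfg.tendsto_at hw

theorem eventually_norm_smul_lt (v : E) {R : ℝ} (hR : 0 < R) :
    ∀ᶠ t : ℂ in 𝓝[≠] 0, ‖t • v‖ < R := by
  have : Continuous fun t : ℂ ↦ ‖t • v‖ := by fun_prop
  exact nhdsWithin_le_nhds (this.continuousAt.eventually_lt_const (by simpa using hR))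

theorem tendstoUniformlyOn_inv_smul_sub_fderiv {f : E → F} {z : E} {R : ℝ} (hR : 0 < R)
    (hf : DifferentiableOn ℂ f (ball z (2 * R)))
    (hmaps : MapsTo f (ball z (2 * R)) (ball (f z) 1)) (v : E) :
    TendstoUniformlyOn (fun (t : ℂ) w ↦ t⁻¹ • (f (w + t • v) - f w)) (fun w ↦ fderiv ℂ f w v)
      (𝓝[≠] 0) (ball z R) := by
  rw [Metric.tendstoUniformlyOn_iff]
  intro ε hε
  have hlim : ∀ᶠ t : ℂ in 𝓝[≠] 0, 2 * 2 * (‖v‖ / R) ^ 2 * ‖t‖ < ε := by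
    have : Continuous fun t : ℂ ↦ 2 * 2 * (‖v‖ / R) ^ 2 * ‖t‖ := by fun_prop
    exact nhdsWithin_le_nhds (this.continuousAt.eventually_lt_const (by simpa using hε))
  filter_upwards [eventually_norm_smul_lt v hR, hlim, self_mem_nhdsWithin]
    with t ht htε (ht₀ : t ≠ 0) w hw
  have hsub : ball w R ⊆ ball z (2 * R) := ball_subset_ball' (by linarith [mem_ball.1 hw])
  have hmaps' : MapsTo f (ball w R) (closedBall (f w) 2) := fun x hx ↦ by
    have hx' := mem_ball.1 (hmaps (hsub hx))
    have hw' := mem_ball.1 (hmaps (hsub (mem_ball_self hR)))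
    exact (dist_triangle_right _ _ (f z)).trans (by linarith)
  rw [dist_eq_norm]
  exact (norm_fderiv_apply_sub_inv_smul_le_of_mapsTo_ball (hf.mono hsub) hmaps' ht₀ ht).trans_lt htε

theorem differentiableOn_fderiv_apply [CompleteSpace F] {f : E → F} {V : Set E} (hV : IsOpen V)
    (hf : DifferentiableOn ℂ f V) (v : E) : DifferentiableOn ℂ (fun w ↦ fderiv ℂ f w v) V := by
  intro z hz
  obtain ⟨R, hR, hball⟩ : ∃ R > 0, ball z (2 * R) ⊆ V ∩ f ⁻¹' ball (f z) 1 := by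
    have hcont := (hf.differentiableAt (hV.mem_nhds hz)).continuousAt
    obtain ⟨S, hS, hball⟩ := Metric.mem_nhds_iff.1
      (inter_mem (hV.mem_nhds hz) (hcont.preimage_mem_nhds (ball_mem_nhds (f z) one_pos)))
    exact ⟨S / 2, half_pos hS, by rwa [mul_div_cancel₀ S two_ne_zero]⟩
  have hfball : DifferentiableOn ℂ f (ball z (2 * R)) := hf.mono fun w hw ↦ (hball hw).1
  have hquot : ∀ᶠ t : ℂ in 𝓝[≠] 0,
      DifferentiableOn ℂ (fun w ↦ t⁻¹ • (f (w + t • v) - f w)) (ball z R) := by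
    filter_upwards [eventually_norm_smul_lt v hR] with t ht
    have hshift : MapsTo (· + t • v) (ball z R) (ball z (2 * R)) := fun w hw ↦ by
      rw [mem_ball, dist_eq_norm] at hw ⊢
      rw [add_sub_right_comm]
      linarith [norm_add_le (w - z) (t • v)]
    exact ((hfball.comp (by fun_prop) hshift).sub
      (hfball.mono (ball_subset_ball (by linarith)))).const_smul _
  exact (differentiableAt_of_tendstoUniformlyOn_ball hR hquot
    (tendstoUniformlyOn_inv_smul_sub_fderiv hR hfball (fun w hw ↦ (hball hw).2)
      v)).differentiableWithinAt

theorem contDiffOn_infty_of_differentiableOn_complex [CompleteSpace F] [FiniteDimensional ℂ E]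
    {f : E → F} {V : Set E} (hV : IsOpen V) (hf : DifferentiableOn ℂ f V) : ContDiffOn ℂ ∞ f V := by
  refine contDiffOn_infty.2 fun m ↦ ?_
  induction m generalizing f with
  | zero => exact contDiffOn_zero.2 hf.continuousOn
  | succ m ih =>
    rw [Nat.cast_succ, contDiffOn_succ_iff_fderiv_of_isOpen hV]
    exact ⟨hf, by simp, contDiffOn_clm_apply.2 fun v ↦ ih (differentiableOn_fderiv_apply hV hf v)⟩

end Holomorphic

section DirectionalDerivatives

theorem hasFDerivAt_of_eventuallyEq_re {E : Type*} [NormedAddCommGroup E] [NormedSpace ℂ E]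
    {f : E → ℂ} {u : E → ℝ} {z : E} (hf : DifferentiableAt ℂ f z)
    (hu : u =ᶠ[𝓝 z] fun w ↦ (f w).re) :
    HasFDerivAt u (Complex.reCLM.comp ((fderiv ℂ f z).restrictScalars ℝ)) z :=
  (Complex.reCLM.hasFDerivAt.comp z (hf.hasFDerivAt.restrictScalars ℝ)).congr_of_eventuallyEq hu

variable {n : ℕ} {u u' : (Fin n → ℂ) → ℝ} {Ω : Set (Fin n → ℂ)} {z : Fin n → ℂ}
  {l l' : List (Fin n → ℂ)}

theorem rpderiv_congr (hΩ : IsOpen Ω) (h : EqOn u u' Ω) (v : Fin n → ℂ) :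
    EqOn (rpderiv v u) (rpderiv v u') Ω := fun z hz ↦ by
  rw [rpderiv, rpderiv, (h.eventuallyEq_of_mem (hΩ.mem_nhds hz)).fderiv_eq]

theorem contDiffOn_rpderiv (hΩ : IsOpen Ω) (hu : ContDiffOn ℝ ∞ u Ω) (v : Fin n → ℂ) :
    ContDiffOn ℝ ∞ (rpderiv v u) Ω :=
  (hu.fderiv_of_isOpen hΩ (by simp)).clm_apply contDiffOn_const

theorem rpderiv_rpderiv_apply (hu : ContDiffAt ℝ 2 u z) (v w : Fin n → ℂ) :
    rpderiv v (rpderiv w u) z = fderiv ℝ (fderiv ℝ u) z v w := by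
  have hd : DifferentiableAt ℝ (fderiv ℝ u) z :=
    (hu.fderiv_right (m := 1) (by norm_num)).differentiableAt (by norm_num)
  unfold rpderiv
  simp [fderiv_clm_apply hd (differentiableAt_const w)]

theorem rpderiv_comm (hu : ContDiffAt ℝ 2 u z) (v w : Fin n → ℂ) :
    rpderiv v (rpderiv w u) z = rpderiv w (rpderiv v u) z := by
  rw [rpderiv_rpderiv_apply hu, rpderiv_rpderiv_apply hu]
  exact (hu.isSymmSndFDerivAt (by simp)).eq v w

/-- The iterated directional derivative of `u` along the directions in the list `l`; the
derivative in the direction of the head of the list is taken last. -/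
noncomputable def rpderivs (l : List (Fin n → ℂ)) (u : (Fin n → ℂ) → ℝ) : (Fin n → ℂ) → ℝ :=
  l.foldr rpderiv u

theorem rpderivs_cons (v : Fin n → ℂ) (l : List (Fin n → ℂ)) (u : (Fin n → ℂ) → ℝ) :
    rpderivs (v :: l) u = rpderiv v (rpderivs l u) := rfl

theorem rpderivs_append (l l' : List (Fin n → ℂ)) (u : (Fin n → ℂ) → ℝ) :
    rpderivs (l ++ l') u = rpderivs l (rpderivs l' u) :=
  List.foldr_append

theorem rpderivs_replicate (k : ℕ) (v : Fin n → ℂ) (u : (Fin n → ℂ) → ℝ) :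
    rpderivs (List.replicate k v) u = (rpderiv v)^[k] u := by
  induction k with
  | zero => rfl
  | succ k ih => rw [List.replicate_succ, rpderivs_cons, ih, Function.iterate_succ_apply']

theorem contDiffOn_rpderivs (hΩ : IsOpen Ω) (hu : ContDiffOn ℝ ∞ u Ω) (l : List (Fin n → ℂ)) :
    ContDiffOn ℝ ∞ (rpderivs l u) Ω := by
  induction l with
  | nil => exact hu
  | cons v l ih => exact contDiffOn_rpderiv hΩ ih v

theorem rpderivs_perm (hΩ : IsOpen Ω) (hu : ContDiffOn ℝ ∞ u Ω) (h : l.Perm l') :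
    EqOn (rpderivs l u) (rpderivs l' u) Ω := by
  induction h with
  | nil => exact fun _ _ ↦ rfl
  | cons v _ ih => exact rpderiv_congr hΩ ih v
  | swap v w l =>
    refine fun z hz ↦ rpderiv_comm ?_ w v
    exact contDiffAt_infty.1 ((contDiffOn_rpderivs hΩ hu l).contDiffAt (hΩ.mem_nhds hz)) 2
  | trans _ _ ih ih' => exact ih.trans ih'

end DirectionalDerivatives

section Pluriharmonic

variable {n : ℕ} {u : (Fin n → ℂ) → ℝ} {Ω : Set (Fin n → ℂ)}

namespace PluriharmonicOn

theorem isOpen (hu : PluriharmonicOn u Ω) : IsOpen Ω :=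
  isOpen_iff_forall_mem_open.2 fun z hz ↦
    let ⟨V, hV, hzV, hVΩ, _⟩ := hu z hz
    ⟨V, hVΩ, hV, hzV⟩

protected theorem contDiffOn (hu : PluriharmonicOn u Ω) : ContDiffOn ℝ ∞ u Ω := by
  intro z hz
  obtain ⟨V, hV, hzV, -, f, hf, hfu⟩ := hu z hz
  have hre : ContDiffOn ℝ ∞ (fun w ↦ (f w).re) V := Complex.reCLM.contDiff.comp_contDiffOn
    ((contDiffOn_infty_of_differentiableOn_complex hV hf).restrict_scalars ℝ)
  exact ((hre.congr fun w hw ↦ (hfu w hw).symm).contDiffAt (hV.mem_nhds hzV)).contDiffWithinAt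

protected theorem rpderiv (hu : PluriharmonicOn u Ω) (v : Fin n → ℂ) :
    PluriharmonicOn (rpderiv v u) Ω := by
  intro z hz
  obtain ⟨V, hV, hzV, hVΩ, f, hf, hfu⟩ := hu z hz
  refine ⟨V, hV, hzV, hVΩ, fun w ↦ fderiv ℂ f w v, differentiableOn_fderiv_apply hV hf v,
    fun w hw ↦ ?_⟩
  have hre : u =ᶠ[𝓝 w] fun x ↦ (f x).re := by
    filter_upwards [hV.mem_nhds hw] with x hx using (hfu x hx).symm
  simp [_root_.rpderiv,
    (hasFDerivAt_of_eventuallyEq_re (hf.differentiableAt (hV.mem_nhds hw)) hre).fderiv]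

protected theorem rpderivs (hu : PluriharmonicOn u Ω) (l : List (Fin n → ℂ)) :
    PluriharmonicOn (rpderivs l u) Ω := by
  induction l with
  | nil => exact hu
  | cons v l ih => exact ih.rpderiv v

end PluriharmonicOn

theorem norm_iteratedDeriv_le_of_abs_re_le {F : ℂ → ℂ} {ρ C : ℝ} (hρ : 0 < ρ) (hC : 0 < C)
    (hF : DifferentiableOn ℂ F (ball 0 ρ)) (him : (F 0).im = 0)
    (hre : ∀ t ∈ ball 0 ρ, |(F t).re| ≤ C) (k : ℕ) :
    ‖iteratedDeriv k F 0‖ ≤ k.factorial * (5 * C) / (ρ / 2) ^ k := by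
  have hF₀ : ‖F 0‖ ≤ C := by
    rw [← Complex.abs_re_eq_norm.2 him]
    exact hre 0 (mem_ball_self hρ)
  refine Complex.norm_iteratedDeriv_le_of_forall_mem_sphere_norm_le k (half_pos hρ)
    (hF.diffContOnCl_ball (closedBall_subset_ball (half_lt_self hρ))) fun t ht ↦ ?_
  have htρ : ‖t‖ = ρ / 2 := by simpa using ht
  calc ‖F t‖ ≤ 2 * C * ‖t‖ / (ρ - ‖t‖) + ‖F 0‖ * (ρ + ‖t‖) / (ρ - ‖t‖) :=
        Complex.borelCaratheodory hC hF (fun s hs ↦ (abs_le.1 (hre s hs)).2) hρ (by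
          rw [mem_ball_zero_iff, htρ]
          exact half_lt_self hρ)
    _ = 2 * C + 3 * ‖F 0‖ := by rw [htρ]; field_simp; ring
    _ ≤ 5 * C := by linarith

theorem re_deriv_eq_rpderiv {F : ℂ → ℂ} {u : (Fin n → ℂ) → ℝ} {z h : Fin n → ℂ} {t : ℂ}
    (hF : DifferentiableAt ℂ F t) (hu : DifferentiableAt ℝ u (z + t • h))
    (hFu : (fun s ↦ u (z + s • h)) =ᶠ[𝓝 t] fun s ↦ (F s).re) :
    (deriv F t).re = rpderiv h u (z + t • h) := by
  have hline : HasDerivAt (fun s : ℂ ↦ z + s • h) h t := by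
    simpa using ((hasDerivAt_id t).smul_const h).const_add z
  have hcomp := hu.hasFDerivAt.comp t (hline.hasFDerivAt.restrictScalars ℝ)
  simpa [rpderiv] using
    DFunLike.congr_fun ((hasFDerivAt_of_eventuallyEq_re hF hFu).unique hcomp) 1

namespace PluriharmonicOn

variable {z h : Fin n → ℂ} {ρ C : ℝ}

theorem harmonicOnNhd_line {S : Set ℂ} (hu : PluriharmonicOn u Ω)
    (hmaps : MapsTo (fun t : ℂ ↦ z + t • h) S Ω) :
    InnerProductSpace.HarmonicOnNhd (fun t : ℂ ↦ u (z + t • h)) S := by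
  intro t ht
  obtain ⟨V, hV, hzV, -, f, hf, hfu⟩ := hu _ (hmaps ht)
  have hopen : IsOpen ((fun t : ℂ ↦ z + t • h) ⁻¹' V) := hV.preimage (by fun_prop)
  have hanalytic : AnalyticAt ℂ (fun s : ℂ ↦ f (z + s • h)) t :=
    (hf.comp (by fun_prop) (Set.mapsTo_preimage _ V)).analyticAt (hopen.mem_nhds hzV)
  refine (InnerProductSpace.harmonicAt_congr_nhds ?_).1 hanalytic.harmonicAt_re
  filter_upwards [hopen.mem_nhds hzV] with s hs using hfu _ hs

theorem exists_differentiableOn_re_eq_line (hu : PluriharmonicOn u Ω)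
    (hmaps : MapsTo (fun t : ℂ ↦ z + t • h) (ball 0 ρ) Ω) :
    ∃ F : ℂ → ℂ, DifferentiableOn ℂ F (ball 0 ρ) ∧ (F 0).im = 0 ∧
      ∀ t ∈ ball 0 ρ, (F t).re = u (z + t • h) := by
  obtain ⟨G, hG, hGu⟩ := (hu.harmonicOnNhd_line hmaps).exists_analyticOnNhd_ball_re_eq
  refine ⟨fun t ↦ G t - (G 0).im * Complex.I, hG.differentiableOn.sub_const _, by simp,
    fun t ht ↦ ?_⟩
  simpa using hGu ht

theorem re_iteratedDeriv_eq {F : ℂ → ℂ} {S : Set ℂ} (hS : IsOpen S)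
    (hu : PluriharmonicOn u Ω) (hmaps : MapsTo (fun t : ℂ ↦ z + t • h) S Ω)
    (hF : DifferentiableOn ℂ F S) (hFu : ∀ t ∈ S, (F t).re = u (z + t • h)) (k : ℕ) :
    ∀ t ∈ S, (iteratedDeriv k F t).re = (rpderiv h)^[k] u (z + t • h) := by
  induction k with
  | zero => simpa using hFu
  | succ k ih =>
    intro t ht
    rw [Function.iterate_succ_apply', iteratedDeriv_succ]
    have hFk : AnalyticAt ℂ (iteratedDeriv k F) t := by
      rw [iteratedDeriv_eq_iterate]
      exact (hF.analyticAt (hS.mem_nhds ht)).iterated_deriv k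
    have huk : DifferentiableAt ℝ ((rpderiv h)^[k] u) (z + t • h) := by
      rw [← rpderivs_replicate]
      exact ((hu.rpderivs _).contDiffOn.contDiffAt (hu.isOpen.mem_nhds (hmaps ht))).differentiableAt
        (by simp)
    refine re_deriv_eq_rpderiv hFk.differentiableAt huk ?_
    filter_upwards [hS.mem_nhds ht] with s hs using (ih s hs).symm

theorem abs_iterate_rpderiv_le (hu : PluriharmonicOn u Ω) (hρ : 0 < ρ) (hC : 0 < C)
    (hmaps : MapsTo (fun t : ℂ ↦ z + t • h) (ball 0 ρ) Ω)
    (hbound : ∀ t ∈ ball (0 : ℂ) ρ, |u (z + t • h)| ≤ C) (k : ℕ) :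
    |(rpderiv h)^[k] u z| ≤ k.factorial * (5 * C) / (ρ / 2) ^ k := by
  obtain ⟨F, hF, him, hFu⟩ := hu.exists_differentiableOn_re_eq_line hmaps
  have hderiv := hu.re_iteratedDeriv_eq isOpen_ball hmaps hF hFu k 0 (mem_ball_self hρ)
  rw [zero_smul, add_zero] at hderiv
  rw [← hderiv]
  exact (Complex.abs_re_le_norm _).trans <| norm_iteratedDeriv_le_of_abs_re_le hρ hC hF him
    (fun t ht ↦ (hFu t ht).symm ▸ hbound t ht) k

theorem hasSum_taylor (hu : PluriharmonicOn u Ω) (hρ : 1 < ρ)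
    (hmaps : MapsTo (fun t : ℂ ↦ z + t • h) (ball 0 ρ) Ω) :
    HasSum (fun k : ℕ ↦ (k.factorial : ℝ)⁻¹ * (rpderiv h)^[k] u z) (u (z + h)) := by
  obtain ⟨F, hF, -, hFu⟩ := hu.exists_differentiableOn_re_eq_line hmaps
  have h₀ : (0 : ℂ) ∈ ball (0 : ℂ) ρ := mem_ball_self (by linarith)
  have h₁ : (1 : ℂ) ∈ ball (0 : ℂ) ρ := by simpa using hρ
  have hcoeff (k : ℕ) : ((k.factorial : ℂ)⁻¹ • ((1 : ℂ) - 0) ^ k • iteratedDeriv k F 0).re =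
      (k.factorial : ℝ)⁻¹ * (rpderiv h)^[k] u z := by
    have hderiv := hu.re_iteratedDeriv_eq isOpen_ball hmaps hF hFu k 0 h₀
    rw [zero_smul, add_zero] at hderiv
    rw [sub_zero, one_pow, one_smul, smul_eq_mul, ← hderiv, ← Complex.re_ofReal_mul]
    push_cast
    rfl
  simpa only [hcoeff, hFu 1 h₁, one_smul] using
    Complex.hasSum_re (Complex.hasSum_taylorSeries_on_ball hF h₁)

theorem abs_sub_taylor_le (hu : PluriharmonicOn u Ω) (hC : 0 < C)
    (hmaps : MapsTo (fun t : ℂ ↦ z + t • h) (ball 0 4) Ω)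
    (hbound : ∀ t ∈ ball (0 : ℂ) 4, |u (z + t • h)| ≤ C) (N : ℕ) :
    |u (z + h) - ∑ k ∈ Finset.range N, (k.factorial : ℝ)⁻¹ * (rpderiv h)^[k] u z| ≤
      10 * C * (1 / 2) ^ N := by
  have hcoeff (k : ℕ) :
      ‖(k.factorial : ℝ)⁻¹ * (rpderiv h)^[k] u z‖ ≤ 5 * C * (1 / 2) ^ k :=
    calc ‖(k.factorial : ℝ)⁻¹ * (rpderiv h)^[k] u z‖
        = (k.factorial : ℝ)⁻¹ * |(rpderiv h)^[k] u z| := by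
          rw [norm_mul, norm_inv, Real.norm_natCast, Real.norm_eq_abs]
      _ ≤ (k.factorial : ℝ)⁻¹ * (k.factorial * (5 * C) / (4 / 2) ^ k) := by
          gcongr
          exact hu.abs_iterate_rpderiv_le (by norm_num) hC hmaps hbound k
      _ = 5 * C * (1 / 2) ^ k := by
          have : (k.factorial : ℝ) ≠ 0 := mod_cast k.factorial_ne_zero
          rw [one_div, inv_pow]
          field_simp
          norm_num
  rw [abs_sub_comm, ← Real.dist_eq]
  calc _ ≤ 5 * C * (1 / 2) ^ N / (1 - 1 / 2) :=
        dist_le_of_le_geometric_of_tendsto (1 / 2 : ℝ) (5 * C) (by norm_num)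
          (dist_partial_sum_le_of_le_geometric hcoeff)
          (hu.hasSum_taylor (by norm_num) hmaps).tendsto_sum_nat N
    _ = 10 * C * (1 / 2) ^ N := by ring

end PluriharmonicOn

end Pluriharmonic

/-- A normal family of pluriharmonic functions on `Ω`, encoded as in Montel's theorem by a uniform
bound on each compact subset of `Ω`. -/
structure PluriharmonicNormalFamily {n : ℕ} {ι : Type*} (u : ι → (Fin n → ℂ) → ℝ)
    (Ω : Set (Fin n → ℂ)) : Prop where
  pluriharmonicOn : ∀ i, PluriharmonicOn (u i) Ω
  exists_bound : ∀ K ⊆ Ω, IsCompact K → ∃ C : ℝ, ∀ i, ∀ z ∈ K, |u i z| ≤ C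

theorem pluriharmonicNormalFamily_of_abs_lt {n : ℕ} (Ω : Set (Fin n → ℂ)) (M : ℝ) :
    PluriharmonicNormalFamily (fun u : {u : (Fin n → ℂ) → ℝ //
      PluriharmonicOn u Ω ∧ ∀ z ∈ Ω, |u z| < M} ↦ u.1) Ω where
  pluriharmonicOn u := u.2.1
  exists_bound _ hK _ := ⟨M, fun u z hz ↦ (u.2.2 z (hK hz)).le⟩

theorem ofFun_sum_mul {ι κ : Type*} (s : Finset κ) (c : κ → ℝ) (f : κ → ι → ℝ) :
    UniformFun.ofFun (fun i ↦ ∑ k ∈ s, c k * f k i) = ∑ k ∈ s, c k • UniformFun.ofFun (f k) := by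
  simp only [← UniformFun.ofFun_smul, ← UniformFun.ofFun_sum]
  congr 1
  ext i
  simp

namespace PluriharmonicNormalFamily

variable {n : ℕ} {ι : Type*} {u : ι → (Fin n → ℂ) → ℝ} {Ω : Set (Fin n → ℂ)}
  {z w : Fin n → ℂ}

theorem exists_pos_bound (hu : PluriharmonicNormalFamily u Ω) {K : Set (Fin n → ℂ)} (hKΩ : K ⊆ Ω)
    (hK : IsCompact K) : ∃ C : ℝ, 0 < C ∧ ∀ i, ∀ z ∈ K, |u i z| ≤ C := by
  obtain ⟨C, hC⟩ := hu.exists_bound K hKΩ hK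
  exact ⟨max C 1, by positivity, fun i z hz ↦ (hC i z hz).trans (le_max_left _ _)⟩

protected theorem rpderiv (hu : PluriharmonicNormalFamily u Ω) (hΩ : IsOpen Ω) (v : Fin n → ℂ) :
    PluriharmonicNormalFamily (fun i ↦ rpderiv v (u i)) Ω where
  pluriharmonicOn i := (hu.pluriharmonicOn i).rpderiv v
  exists_bound K hKΩ hK := by
    obtain ⟨δ, hδ, hδΩ⟩ := hK.exists_cthickening_subset_open hΩ hKΩ
    obtain ⟨C, hC, hbound⟩ := hu.exists_pos_bound hδΩ hK.cthickening
    set ρ : ℝ := δ / (‖v‖ + 1)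
    have hρ : 0 < ρ := by positivity
    have hline (z) (hz : z ∈ K) : MapsTo (fun t : ℂ ↦ z + t • v) (ball 0 ρ) (cthickening δ K) := by
      intro t ht
      refine mem_cthickening_of_dist_le _ z _ _ hz ?_
      calc dist (z + t • v) z = ‖t‖ * ‖v‖ := by rw [dist_self_add_left, norm_smul]
        _ ≤ ρ * (‖v‖ + 1) := by
          gcongr
          · exact (mem_ball_zero_iff.1 ht).le
          · exact le_add_of_nonneg_right zero_le_one
        _ = δ := div_mul_cancel₀ δ (by positivity)
    exact ⟨_, fun i z hz ↦ (hu.pluriharmonicOn i).abs_iterate_rpderiv_le hρ hC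
      ((hline z hz).mono_right hδΩ) (fun t ht ↦ hbound i _ (hline z hz ht)) 1⟩

protected theorem rpderivs (hu : PluriharmonicNormalFamily u Ω) (hΩ : IsOpen Ω)
    (l : List (Fin n → ℂ)) : PluriharmonicNormalFamily (fun i ↦ rpderivs l (u i)) Ω := by
  induction l with
  | nil => exact hu
  | cons v l ih => exact ih.rpderiv hΩ v

theorem tendstoUniformly_taylor (hu : PluriharmonicNormalFamily u Ω) {h : Fin n → ℂ}
    (hΩ : closedBall z (4 * ‖h‖) ⊆ Ω) :
    TendstoUniformly
      (fun N i ↦ ∑ k ∈ Finset.range N, (k.factorial : ℝ)⁻¹ * (rpderiv h)^[k] (u i) z)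
      (fun i ↦ u i (z + h)) atTop := by
  obtain ⟨C, hC, hbound⟩ := hu.exists_pos_bound hΩ (isCompact_closedBall z _)
  have hline : MapsTo (fun t : ℂ ↦ z + t • h) (ball 0 4) (closedBall z (4 * ‖h‖)) := by
    intro t ht
    rw [mem_closedBall, dist_self_add_left, norm_smul]
    gcongr
    exact (mem_ball_zero_iff.1 ht).le
  have hlim : Tendsto (fun N : ℕ ↦ 10 * C * (1 / 2 : ℝ) ^ N) atTop (𝓝 0) := by
    simpa using (tendsto_pow_atTop_nhds_zero_of_lt_one (by norm_num : (0 : ℝ) ≤ 1 / 2)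
      (by norm_num)).const_mul (10 * C)
  rw [Metric.tendstoUniformly_iff]
  intro ε hε
  filter_upwards [hlim.eventually_lt_const hε] with N hN i
  rw [Real.dist_eq]
  exact ((hu.pluriharmonicOn i).abs_sub_taylor_le hC (hline.mono_right hΩ)
    (fun t ht ↦ hbound i _ (hline ht)) N).trans_lt hN

variable {P : Submodule ℝ (ι →ᵤ ℝ)}

theorem rpderivs_mem_of_closedBall_subset (hu : PluriharmonicNormalFamily u Ω) (hΩ : IsOpen Ω)
    (hP : IsClosed (P : Set (ι →ᵤ ℝ))) (hzw : closedBall z (4 * dist w z) ⊆ Ω)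
    (hz : ∀ l, UniformFun.ofFun (fun i ↦ rpderivs l (u i) z) ∈ P) (l : List (Fin n → ℂ)) :
    UniformFun.ofFun (fun i ↦ rpderivs l (u i) w) ∈ P := by
  rw [dist_eq_norm] at hzw
  have htaylor := (hu.rpderivs hΩ l).tendstoUniformly_taylor hzw
  rw [add_sub_cancel] at htaylor
  have htendsto : Tendsto (fun N ↦ UniformFun.ofFun fun i ↦ ∑ k ∈ Finset.range N,
      (k.factorial : ℝ)⁻¹ * (rpderiv (w - z))^[k] (rpderivs l (u i)) z)
      atTop (𝓝 (UniformFun.ofFun fun i ↦ rpderivs l (u i) w)) :=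
    UniformFun.tendsto_iff_tendstoUniformly.2 htaylor
  refine hP.mem_of_tendsto htendsto (Eventually.of_forall fun N ↦ ?_)
  have hsum := ofFun_sum_mul (Finset.range N) (fun k ↦ (k.factorial : ℝ)⁻¹)
    fun k i ↦ rpderivs (List.replicate k (w - z) ++ l) (u i) z
  simp only [rpderivs_append, rpderivs_replicate] at hsum
  rw [hsum, SetLike.mem_coe]
  refine Submodule.sum_mem _ fun k _ ↦ Submodule.smul_mem _ _ ?_
  simpa only [rpderivs_append, rpderivs_replicate] using hz (List.replicate k (w - z) ++ l)

theorem rpderivs_mem_of_isPreconnected (hu : PluriharmonicNormalFamily u Ω) (hΩ : IsOpen Ω)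
    (hconn : IsPreconnected Ω) (hP : IsClosed (P : Set (ι →ᵤ ℝ))) {a b : Fin n → ℂ} (ha : a ∈ Ω)
    (hb : b ∈ Ω) (hmem : ∀ l, UniformFun.ofFun (fun i ↦ rpderivs l (u i) a) ∈ P)
    (l : List (Fin n → ℂ)) : UniformFun.ofFun (fun i ↦ rpderivs l (u i) b) ∈ P := by
  set S : Set (Fin n → ℂ) := {z ∈ Ω | ∀ l, UniformFun.ofFun (fun i ↦ rpderivs l (u i) z) ∈ P}
  have hstep {z w} {R : ℝ} (hz : z ∈ S) (hw : w ∈ Ω) (hR : ball w R ⊆ Ω) (hwz : 5 * dist w z < R) :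
      w ∈ S := by
    refine ⟨hw, hu.rpderivs_mem_of_closedBall_subset hΩ hP
      ((closedBall_subset_ball' ?_).trans hR) hz.2⟩
    linarith [dist_comm w z]
  suffices hsub : Ω ⊆ S from (hsub hb).2 l
  refine hconn.subset_of_closure_inter_subset ?_ ⟨a, ha, ha, hmem⟩ ?_
  · refine Metric.isOpen_iff.2 fun z hz ↦ ?_
    obtain ⟨R, hR, hball⟩ := Metric.isOpen_iff.1 hΩ z hz.1
    refine ⟨R / 6, by positivity, fun w hw ↦ ?_⟩
    have hwz := mem_ball.1 hw
    exact hstep (R := 5 * R / 6) hz (hball (ball_subset_ball (by linarith) hw))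
      ((ball_subset_ball' (by linarith)).trans hball) (by linarith)
  · rintro w ⟨hwS, hw⟩
    obtain ⟨R, hR, hball⟩ := Metric.isOpen_iff.1 hΩ w hw
    obtain ⟨z, hz, hwz⟩ := Metric.mem_closure_iff.1 hwS (R / 5) (by positivity)
    exact hstep hz hw hball (by linarith)

end PluriharmonicNormalFamily

section MultiIndex

variable {n : ℕ}

/-- The real coordinate directions of `ℂⁿ`: `⟨i, 0⟩` is the direction of `xᵢ` and `⟨i, 1⟩` that of
`yᵢ`, where `zᵢ = xᵢ + i yᵢ`. -/
noncomputable def realCoordBasis (n : ℕ) : Module.Basis (Σ _ : Fin n, Fin 2) ℝ (Fin n → ℂ) :=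
  Pi.basis fun _ ↦ Complex.basisOneI

theorem rpderiv_eq_sum_realCoordBasis (v : Fin n → ℂ) (u : (Fin n → ℂ) → ℝ) (z : Fin n → ℂ) :
    rpderiv v u z =
      ∑ p, (realCoordBasis n).repr v p * rpderiv (realCoordBasis n p) u z := by
  conv_lhs => rw [rpderiv, ← (realCoordBasis n).sum_repr v, map_sum]
  simp only [map_smul, smul_eq_mul, rpderiv]

/-- The coordinate directions of the derivatives taken in `mpderivR β`, in that order. -/
def multiIndexList (β : Fin n → ℕ × ℕ) : List (Σ _ : Fin n, Fin 2) :=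
  (List.finRange n).flatMap fun i ↦
    List.replicate (β i).1 ⟨i, 0⟩ ++ List.replicate (β i).2 ⟨i, 1⟩

theorem mpderivR_eq_rpderivs (β : Fin n → ℕ × ℕ) (u : (Fin n → ℂ) → ℝ) :
    mpderivR β u = rpderivs ((multiIndexList β).map (realCoordBasis n)) u := by
  unfold mpderivR multiIndexList
  induction List.finRange n with
  | nil => rfl
  | cons i L ih =>
    simp only [List.map_cons, List.foldr_cons, List.flatMap_cons, List.map_append,
      List.map_replicate, rpderivs_append, rpderivs_replicate, ← ih]
    simp [realCoordBasis]

theorem count_multiIndexList (β : Fin n → ℕ × ℕ) (i : Fin n) (t : Fin 2) :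
    (multiIndexList β).count ⟨i, t⟩ = ![(β i).1, (β i).2] t := by
  have hcount (j : Fin n) :
      List.count (α := Σ _ : Fin n, Fin 2) ⟨i, t⟩
        (List.replicate (β j).1 ⟨j, 0⟩ ++ List.replicate (β j).2 ⟨j, 1⟩) =
      if i = j then ![(β i).1, (β i).2] t else 0 := by
    rcases eq_or_ne i j with rfl | hij
    · fin_cases t <;> simp [List.count_replicate]
    · simp [List.count_replicate, hij, hij.symm]
  calc (multiIndexList β).count ⟨i, t⟩
      = ∑ j, if i = j then ![(β i).1, (β i).2] t else 0 := by
        simp only [multiIndexList, List.count_flatMap, Function.comp_def, hcount, Fin.sum_univ_def]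
    _ = ![(β i).1, (β i).2] t := Fintype.sum_ite_eq i _

theorem perm_multiIndexList_count (l : List (Σ _ : Fin n, Fin 2)) :
    l.Perm (multiIndexList fun i ↦ (l.count ⟨i, 0⟩, l.count ⟨i, 1⟩)) := by
  rw [List.perm_iff_count]
  rintro ⟨i, t⟩
  rw [count_multiIndexList]
  fin_cases t <;> rfl

/-- The multi-indices of order at most `N`. -/
def multiIndicesLE (n N : ℕ) : Finset (Fin n → ℕ × ℕ) :=
  (Fintype.piFinset fun _ : Fin n ↦ Finset.range (N + 1) ×ˢ Finset.range (N + 1)).filter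
    (fun β ↦ ∑ i, ((β i).1 + (β i).2) ≤ N)

theorem mem_multiIndicesLE {N : ℕ} {β : Fin n → ℕ × ℕ} :
    β ∈ multiIndicesLE n N ↔ ∑ i, ((β i).1 + (β i).2) ≤ N := by
  simp only [multiIndicesLE, Finset.mem_filter, Fintype.mem_piFinset, Finset.mem_product,
    Finset.mem_range, and_iff_right_iff_imp]
  intro h i
  have := Finset.single_le_sum (f := fun i ↦ (β i).1 + (β i).2) (fun _ _ ↦ Nat.zero_le _)
    (Finset.mem_univ i)
  omega

theorem exists_sum_multiIndicesLE_of_mem_span {R V : Type*} [Semiring R] [AddCommMonoid V]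
    [Module R V] {φ : (Fin n → ℕ × ℕ) → V} {g : V} (hg : g ∈ Submodule.span R (Set.range φ)) :
    ∃ N : ℕ, 0 < N ∧ ∃ c : (Fin n → ℕ × ℕ) → R, ∑ β ∈ multiIndicesLE n N, c β • φ β = g := by
  obtain ⟨c, rfl⟩ := Finsupp.mem_span_range_iff_exists_finsupp.1 hg
  refine ⟨(c.support.sup fun β ↦ ∑ i, ((β i).1 + (β i).2)) + 1, Nat.succ_pos _, c, ?_⟩
  refine (Finset.sum_subset (fun β hβ ↦ mem_multiIndicesLE.2 ?_) fun β _ hβ ↦ ?_).symm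
  · exact (Finset.le_sup (f := fun β ↦ ∑ i, ((β i).1 + (β i).2)) hβ).trans (Nat.le_succ _)
  · rw [Finsupp.notMem_support_iff.1 hβ, zero_smul]

variable {ι : Type*} {u : ι → (Fin n → ℂ) → ℝ} {Ω : Set (Fin n → ℂ)} {a : Fin n → ℂ}

/-- The linear combinations of the functionals `u ↦ (∂^β u)(a)` on the family `u`, in the topology
of uniform convergence over the family. -/
noncomputable def mpderivSpan (u : ι → (Fin n → ℂ) → ℝ) (a : Fin n → ℂ) :
    Submodule ℝ (ι →ᵤ ℝ) :=
  Submodule.span ℝ (Set.range fun β ↦ UniformFun.ofFun fun i ↦ mpderivR β (u i) a)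

theorem rpderivs_realCoordBasis_mem_mpderivSpan (hΩ : IsOpen Ω)
    (hu : ∀ i, ContDiffOn ℝ ∞ (u i) Ω) (ha : a ∈ Ω) (l : List (Σ _ : Fin n, Fin 2)) :
    UniformFun.ofFun (fun i ↦ rpderivs (l.map (realCoordBasis n)) (u i) a) ∈ mpderivSpan u a := by
  refine Submodule.subset_span ⟨fun i ↦ (l.count ⟨i, 0⟩, l.count ⟨i, 1⟩), ?_⟩
  simp only [mpderivR_eq_rpderivs]
  congr 1
  ext i
  exact rpderivs_perm hΩ (hu i) ((perm_multiIndexList_count l).symm.map _) ha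

/-- Each direction in `l` is expanded in the coordinate basis; the directions already expanded are
moved behind those of `l` by the symmetry of higher derivatives. -/
theorem rpderivs_append_realCoordBasis_mem_mpderivSpan (hΩ : IsOpen Ω)
    (hu : ∀ i, ContDiffOn ℝ ∞ (u i) Ω) (ha : a ∈ Ω) (l : List (Fin n → ℂ)) :
    ∀ l' : List (Σ _ : Fin n, Fin 2),
      UniformFun.ofFun (fun i ↦ rpderivs (l ++ l'.map (realCoordBasis n)) (u i) a) ∈
        mpderivSpan u a := by
  induction l with
  | nil => exact rpderivs_realCoordBasis_mem_mpderivSpan hΩ hu ha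
  | cons v l ih =>
    intro l'
    have hcoord (p) : UniformFun.ofFun (fun i ↦ rpderiv (realCoordBasis n p)
        (rpderivs (l ++ l'.map (realCoordBasis n)) (u i)) a) ∈ mpderivSpan u a := by
      have hperm : (l ++ (p :: l').map (realCoordBasis n)).Perm
          (realCoordBasis n p :: (l ++ l'.map (realCoordBasis n))) := List.perm_middle
      have := ih (p :: l')
      simp only [rpderivs_perm hΩ (hu _) hperm ha] at this
      exact this
    simp only [List.cons_append, rpderivs_cons, rpderiv_eq_sum_realCoordBasis v, ofFun_sum_mul]
    exact Submodule.sum_mem _ fun p _ ↦ Submodule.smul_mem _ _ (hcoord p)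

theorem rpderivs_mem_mpderivSpan (hΩ : IsOpen Ω) (hu : ∀ i, ContDiffOn ℝ ∞ (u i) Ω) (ha : a ∈ Ω)
    (l : List (Fin n → ℂ)) : UniformFun.ofFun (fun i ↦ rpderivs l (u i) a) ∈ mpderivSpan u a := by
  simpa using rpderivs_append_realCoordBasis_mem_mpderivSpan hΩ hu ha l []

end MultiIndex

theorem exists_forall_abs_sub_lt_of_mem_closure {ι : Type*} {S : Set (ι →ᵤ ℝ)} {f : ι → ℝ} {ε : ℝ}
    (hf : UniformFun.ofFun f ∈ closure S) (hε : 0 < ε) :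
    ∃ g ∈ S, ∀ i, |f i - UniformFun.toFun g i| < ε := by
  obtain ⟨g, hgS, hg⟩ := (mem_closure_iff_nhds_basis
    (UniformFun.hasBasis_nhds_of_basis ι ℝ _ Metric.uniformity_basis_dist)).1 hf ε hε
  exact ⟨g, hgS, hg⟩

theorem pluriharmonic_remote_sensing_general {n : ℕ} {ι : Type*} {u : ι → (Fin n → ℂ) → ℝ}
    {Ω : Set (Fin n → ℂ)} (hu : PluriharmonicNormalFamily u Ω) (hΩ : IsOpen Ω)
    (hconn : IsPreconnected Ω) {a b : Fin n → ℂ} (ha : a ∈ Ω) (hb : b ∈ Ω) {ε : ℝ} (hε : 0 < ε) :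
    ∃ N : ℕ, 0 < N ∧ ∃ c : (Fin n → ℕ × ℕ) → ℝ,
      ∀ i, |u i b - ∑ β ∈ multiIndicesLE n N, c β * mpderivR β (u i) a| < ε := by
  have hmem (l) : UniformFun.ofFun (fun i ↦ rpderivs l (u i) a) ∈
      (mpderivSpan u a).topologicalClosure :=
    Submodule.le_topologicalClosure _ <|
      rpderivs_mem_mpderivSpan hΩ (fun i ↦ (hu.pluriharmonicOn i).contDiffOn) ha l
  have hclosure := hu.rpderivs_mem_of_isPreconnected hΩ hconn
    (Submodule.isClosed_topologicalClosure _) ha hb hmem []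
  obtain ⟨g, hg, hgε⟩ := exists_forall_abs_sub_lt_of_mem_closure hclosure hε
  obtain ⟨N, hN, c, rfl⟩ := exists_sum_multiIndicesLE_of_mem_span hg
  rw [← ofFun_sum_mul] at hgε
  exact ⟨N, hN, c, hgε⟩

/-- Remote sensing for pluriharmonic functions: on a bounded domain `Ω ⊆ ℂⁿ` with
distinct points `a, b ∈ Ω`, for every `M > 0` and `ε > 0` there are `N` and real
coefficients `c_β` (`|β| ≤ N`), independent of `u`, such that every pluriharmonic
`u` on `Ω` bounded by `M` satisfies `|u(b) − Σ_{|β|≤N} c_β ∂^β u(a)| < ε`. -/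
theorem pluriharmonic_remote_sensing
    (n : ℕ) (hn : 0 < n)
    (Ω : Set (Fin n → ℂ)) (hΩopen : IsOpen Ω) (hΩconn : IsConnected Ω)
    (hΩbdd : Bornology.IsBounded Ω)
    (a b : Fin n → ℂ) (ha : a ∈ Ω) (hb : b ∈ Ω) (hab : a ≠ b)
    (M ε : ℝ) (hM : 0 < M) (hε : 0 < ε) :
    ∃ N : ℕ, 0 < N ∧ ∃ c : (Fin n → ℕ × ℕ) → ℝ,
      ∀ u : (Fin n → ℂ) → ℝ, PluriharmonicOn u Ω → (∀ z ∈ Ω, |u z| < M) →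
        |u b - ∑ β ∈ (Fintype.piFinset fun _ : Fin n =>
              Finset.range (N + 1) ×ˢ Finset.range (N + 1)).filter
              (fun β => ∑ i, ((β i).1 + (β i).2) ≤ N),
            c β * mpderivR β u a| < ε := by
  obtain ⟨N, hN, c, hc⟩ := pluriharmonic_remote_sensing_general
    (pluriharmonicNormalFamily_of_abs_lt Ω M) hΩopen hΩconn.isPreconnected ha hb hε
  exact ⟨N, hN, c, fun u hu huM ↦ hc ⟨u, hu, huM⟩⟩
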